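/- For a passive linear quantum system, the unobservable subspace equals the span of the eigenvectors of A whose eigenvalues lie on the imaginary axis: ⋂_{k=0}^{n-1} Ker(C A^k) = ⨆_{λ ∈ ℂ, Re λ = 0} Ker(A - λ I_n) (supremum of eigenspaces of A over all purely imaginary eigenvalues λ, taken as subspaces of ℂ^n). -/

import Mathlib

open Matrix

lemma obs_all {n m : ℕ} (hn : 0 < n) (C : Matrix (Fin m) (Fin n) ℂ)
    (A : Matrix (Fin n) (Fin n) ℂ) (v : Fin n → ℂ)
    (h : ∀ k < n, (C * A ^ k) *ᵥ v = 0) (k : ℕ) : (C * A ^ k) *ᵥ v = 0 := by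
  have : Nonempty (Fin n) := ⟨⟨0, hn⟩⟩
  rw [Matrix.pow_eq_aeval_mod_charpoly]
  have hd : (Polynomial.X ^ k %ₘ A.charpoly).natDegree < n := by
    have := Polynomial.natDegree_modByMonic_lt (Polynomial.X ^ k) (Matrix.charpoly_monic A) (by
      intro h1
      have h2 := Matrix.charpoly_natDegree_eq_dim A
      rw [h1] at h2
      simp at h2
      omega)
    rwa [Matrix.charpoly_natDegree_eq_dim, Fintype.card_fin] at this
  rw [Polynomial.aeval_eq_sum_range' hd, Matrix.mul_sum, Matrix.sum_mulVec]
  refine Finset.sum_eq_zero fun i hi => ?_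
  rw [Matrix.mul_smul, Matrix.smul_mulVec, h i (Finset.mem_range.1 hi), smul_zero]

lemma herm_top {n : ℕ} (Ω : Matrix (Fin n) (Fin n) ℂ) (hΩ : Ω.IsHermitian) :
    ⨆ μ, Module.End.genEigenspace (Matrix.toLin' Ω) μ 1 = ⊤ := by
  rw [eq_top_iff]
  intro v _
  have hv := hΩ.eigenvectorBasis.sum_repr (WithLp.toLp 2 v)
  have hv' : v = ∑ i, hΩ.eigenvectorBasis.repr (WithLp.toLp 2 v) i •
      (WithLp.ofLp (hΩ.eigenvectorBasis i)) := by
    have := congrArg WithLp.ofLp hv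
    rw [WithLp.ofLp_sum] at this
    simpa using this.symm
  rw [hv']
  refine Submodule.sum_mem _ fun i _ => Submodule.smul_mem _ _ ?_
  refine Submodule.mem_iSup_of_mem ((hΩ.eigenvalues i : ℝ) : ℂ) ?_
  change _ ∈ Module.End.eigenspace _ _
  rw [Module.End.mem_eigenspace_iff, Matrix.toLin'_apply, hΩ.mulVec_eigenvectorBasis]
  ext; simp

lemma herm_real {n : ℕ} (Ω : Matrix (Fin n) (Fin n) ℂ) (hΩ : Ω.IsHermitian) (v : Fin n → ℂ) :
    (star v ⬝ᵥ Ω *ᵥ v).im = 0 := hΩ.im_star_dotProduct_mulVec_self v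

lemma self_im {n : ℕ} (v : Fin n → ℂ) : (star v ⬝ᵥ v).im = 0 := by
  simpa using herm_real 1 Matrix.isHermitian_one v

open scoped ComplexOrder in
lemma self_zero {n : ℕ} (v : Fin n → ℂ) : star v ⬝ᵥ v = 0 ↔ v = 0 :=
  dotProduct_star_self_eq_zero

/-- **Theorem 2 (characterization of the DFS).** -/
theorem passive_unobservable_eq_imaginary_eigenspaces
    (n m : ℕ) (hn : 0 < n) (hm : 0 < m)
    (Ω : Matrix (Fin n) (Fin n) ℂ) (hΩ : Ω.IsHermitian)
    (C : Matrix (Fin m) (Fin n) ℂ)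
    (A : Matrix (Fin n) (Fin n) ℂ)
    (hA : A = (-Complex.I) • Ω - (1 / 2 : ℂ) • (Cᴴ * C))
    (B : Matrix (Fin n) (Fin m) ℂ) (hB : B = -Cᴴ) :
    (⨅ k ∈ Finset.range n, LinearMap.ker ((C * A ^ k).mulVecLin)) =
      ⨆ (μ : ℂ) (_ : μ.re = 0),
        LinearMap.ker ((A - μ • (1 : Matrix (Fin n) (Fin n) ℂ)).mulVecLin) := by
  have hAv : ∀ v, A *ᵥ v = (-Complex.I) • Ω *ᵥ v - (1 / 2 : ℂ) • (Cᴴ *ᵥ (C *ᵥ v)) := by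
    intro v
    rw [hA, Matrix.sub_mulVec, Matrix.smul_mulVec, Matrix.smul_mulVec, Matrix.mulVec_mulVec]
  have hmem : ∀ v, v ∈ (⨅ k ∈ Finset.range n, LinearMap.ker ((C * A ^ k).mulVecLin)) ↔
      ∀ k, (C * A ^ k) *ᵥ v = 0 := by
    intro v
    simp only [Submodule.mem_iInf, Finset.mem_range, LinearMap.mem_ker, Matrix.mulVecLin_apply]
    exact ⟨fun h => obs_all hn C A v h, fun h k _ => h k⟩
  set U := (⨅ k ∈ Finset.range n, LinearMap.ker ((C * A ^ k).mulVecLin)) with hU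
  have hC : ∀ v ∈ U, C *ᵥ v = 0 := fun v hv => by simpa using (hmem v).1 hv 0
  have hAU : ∀ v ∈ U, A *ᵥ v = (-Complex.I) • Ω *ᵥ v := fun v hv => by
    rw [hAv, hC v hv]; simp
  have hinv : ∀ v ∈ U, A *ᵥ v ∈ U := by
    intro v hv
    rw [hmem] at hv ⊢
    intro k
    rw [Matrix.mulVec_mulVec, Matrix.mul_assoc, ← pow_succ]
    exact hv (k + 1)
  apply le_antisymm
  · have hinvΩ : ∀ v ∈ U, Matrix.toLin' Ω v ∈ U := by
      intro v hv
      have : Matrix.toLin' Ω v = Complex.I • A *ᵥ v := by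
        rw [hAU v hv, smul_smul]; simp
      rw [this]
      exact U.smul_mem _ (hinv v hv)
    rw [Submodule.eq_iSup_inf_genEigenspace 1 hinvΩ (herm_top Ω hΩ)]
    refine iSup_le fun μ => ?_
    rintro v ⟨hv, hv2⟩
    change v ∈ Module.End.eigenspace _ _ at hv2
    rw [Module.End.mem_eigenspace_iff, Matrix.toLin'_apply] at hv2
    by_cases h0 : v = 0
    · rw [h0]; exact Submodule.zero_mem _
    have hμ : μ.im = 0 := by
      have h1 := herm_real Ω hΩ v
      rw [hv2, dotProduct_smul, smul_eq_mul, Complex.mul_im, self_im] at h1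
      have h2 : star v ⬝ᵥ v ≠ 0 := fun h => h0 ((self_zero _).1 h)
      have h3 : (star v ⬝ᵥ v).re ≠ 0 := fun h => h2 (Complex.ext h (self_im v))
      simpa [h3] using h1
    refine Submodule.mem_iSup_of_mem (-Complex.I * μ) (Submodule.mem_iSup_of_mem (by simp [hμ]) ?_)
    rw [LinearMap.mem_ker, Matrix.mulVecLin_apply, Matrix.sub_mulVec, hAU v hv, hv2,
      Matrix.smul_mulVec, Matrix.one_mulVec, smul_smul, sub_self]
  · refine iSup_le fun μ => iSup_le fun hμ => ?_
    intro v hv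
    rw [LinearMap.mem_ker, Matrix.mulVecLin_apply, Matrix.sub_mulVec,
      Matrix.smul_mulVec, Matrix.one_mulVec, sub_eq_zero] at hv
    have hCv : C *ᵥ v = 0 := by
      have h1 := congrArg (fun w => (star v ⬝ᵥ w).re) (hAv v)
      have h2 : star v ⬝ᵥ Cᴴ *ᵥ (C *ᵥ v) = star (C *ᵥ v) ⬝ᵥ (C *ᵥ v) := by
        rw [Matrix.dotProduct_mulVec, Matrix.star_mulVec]
      simp only [hv, dotProduct_sub, dotProduct_smul, h2, smul_eq_mul, Complex.mul_re,
        Complex.sub_re, self_im, hμ, herm_real Ω hΩ v] at h1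
      have h3 : (star (C *ᵥ v) ⬝ᵥ (C *ᵥ v)).re = 0 := by simpa using h1
      have h4 : star (C *ᵥ v) ⬝ᵥ (C *ᵥ v) = 0 := Complex.ext h3 (self_im _)
      exact (self_zero _).1 h4
    rw [hmem]
    intro k
    have hk : (A ^ k) *ᵥ v = μ ^ k • v := by
      induction k with
      | zero => simp
      | succ k ih =>
        rw [pow_succ, ← Matrix.mulVec_mulVec, hv, Matrix.mulVec_smul, ih, smul_smul, pow_succ,
          mul_comm]
    rw [← Matrix.mulVec_mulVec, hk, Matrix.mulVec_smul, hCv, smul_zero]
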